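/- arXiv:0909.1599 — 3 statements merged into one kernel-verified Lean document; each statement's English description precedes it below -/
import Mathlib

section
/- Let $N \ge 2$ and $M = N+1$. A family $\Psi = \{\psi_k\}_{k=1}^M$ of vectors in $\mathbb{R}^N$ is called a restricted equiangular tight frame if $\|\psi_k\| = 1$ for all $k$, $F^{*}F = \frac{M}{N} I_N$ where $F$ is the $M\times N$ matrix with rows $\psi_k^{T}$, and there is a constant $c \in \mathbb{R}$ with $\langle \psi_\ell, \psi_k\rangle = c$ for all $1 \le \ell < k \le M$. Let $\{\phi_k\}_{k=1}^M$ be the real harmonic tight frame of $M$ vectors in $\mathbb{R}^N$, that is, for $k = 0,\dots,M-1$, $$\phi_{k+1}^{T} = \sqrt{\tfrac{2}{N}}\left[\cos\tfrac{k\pi}{M}, \cos\tfrac{3k\pi}{M},\dots,\cos\tfrac{(N-1)k\pi}{M}, \sin\tfrac{k\pi}{M}, \sin\tfrac{3k\pi}{M},\dots,\sin\tfrac{(N-1)k\pi}{M}\right]$$ if $N$ is even, and $$\phi_{k+1}^{T} = \sqrt{\tfrac{2}{N}}\left[\tfrac{1}{\sqrt2}, \cos\tfrac{2k\pi}{M},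 \cos\tfrac{4k\pi}{M},\dots,\cos\tfrac{(N-1)k\pi}{M}, \sin\tfrac{2k\pi}{M}, \sin\tfrac{4k\pi}{M},\dots,\sin\tfrac{(N-1)k\pi}{M}\right]$$ if $N$ is odd. Then $\Psi$ is a restricted equiangular tight frame if and only if there exist an orthogonal $N\times N$ matrix $U$, a permutation $\sigma$ of $\{1,\dots,M\}$ and a sign $\gamma \in \{-1,+1\}$ such that $$\psi_k = U\left(\gamma(-1)^{\sigma(k)}\phi_{\sigma(k)}\right) \quad\text{for all } k = 1,\dots,M;$$ that is, the family of all restricted equiangular tight frames with $M = N+1$ consists exactly of the frames obtained from the modulated harmonic tight frames $\{\gamma(-1)^k\phi_k\}_{k=1}^M$ by orthogonal maps (Type I equivalence) and permutations of the indices (Type II equivalence). The "if" direction also holds for $N = 1$, $M = 2$. -/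
/-- The analysis frame operator: the `M × N` matrix whose `k`-th row is `φ_k`. -/
def analysisMatrix {M N : ℕ} (Φ : Fin M → EuclideanSpace ℝ (Fin N)) :
    Matrix (Fin M) (Fin N) ℝ :=
  Matrix.of fun k i => Φ k i

/-- Unit-norm tight frames: all vectors have norm one and `F* F = (M / N) I_N`. -/
def IsUNTF {M N : ℕ} (Φ : Fin M → EuclideanSpace ℝ (Fin N)) : Prop :=
  (∀ k, ‖Φ k‖ = 1) ∧
    (analysisMatrix Φ).transpose * analysisMatrix Φ =
      ((M : ℝ) / (N : ℝ)) • (1 : Matrix (Fin N) (Fin N) ℝ)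

/-- Restricted equiangular tight frames: unit-norm tight frames in which all inner products of
two vectors with different indices are equal (signs included). -/
def IsRestrictedETF {M N : ℕ} (Φ : Fin M → EuclideanSpace ℝ (Fin N)) : Prop :=
  IsUNTF Φ ∧ ∃ c : ℝ, ∀ l k : Fin M, l < k → inner ℝ (Φ l) (Φ k) = c

/-- The real harmonic tight frame of `M` vectors in `ℝ^N`. Indices start at `0`: `htf N M k` is
the vector `φ_{k+1}`, for `k = 0, …, M - 1`. For even `N` the frequencies of the `N / 2` cosines
and of the `N / 2` sines are `1, 3, …, N - 1`; for odd `N` there is one constant entry, and the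
frequencies of the `(N - 1) / 2` cosines and of the `(N - 1) / 2` sines are `2, 4, …, N - 1`. -/
noncomputable def htf (N M : ℕ) (k : Fin M) : EuclideanSpace ℝ (Fin N) :=
  WithLp.toLp 2 fun i : Fin N =>
    Real.sqrt (2 / (N : ℝ)) *
      (if Even N then
        if (i : ℕ) < N / 2 then
          Real.cos (((2 * (i : ℕ) + 1 : ℕ) : ℝ) * ((k : ℕ) : ℝ) * Real.pi / (M : ℝ))
        else
          Real.sin (((2 * ((i : ℕ) - N / 2) + 1 : ℕ) : ℝ) * ((k : ℕ) : ℝ) * Real.pi / (M : ℝ))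
      else
        if (i : ℕ) = 0 then 1 / Real.sqrt 2
        else if (i : ℕ) ≤ (N - 1) / 2 then
          Real.cos (((2 * (i : ℕ) : ℕ) : ℝ) * ((k : ℕ) : ℝ) * Real.pi / (M : ℝ))
        else
          Real.sin (((2 * ((i : ℕ) - (N - 1) / 2) : ℕ) : ℝ) * ((k : ℕ) : ℝ) * Real.pi / (M : ℝ)))

/-- The modulated harmonic tight frame `γ (-1)^k φ_k`, `k = 1, …, M`; the index `k : Fin M` stands
for `k + 1`. -/
noncomputable def modulatedHTF (N M : ℕ) (γ : ℝ) (k : Fin M) : EuclideanSpace ℝ (Fin N) :=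
  (γ * (-1 : ℝ) ^ ((k : ℕ) + 1)) • htf N M k

/-- `Ψ` arises from a modulated harmonic tight frame by a permutation of the indices (Type II
equivalence) and an orthogonal matrix (Type I equivalence). Either may be trivial. -/
def IsEquivModulatedHTF {M N : ℕ} (Ψ : Fin M → EuclideanSpace ℝ (Fin N)) : Prop :=
  ∃ U ∈ Matrix.orthogonalGroup (Fin N) ℝ, ∃ σ : Equiv.Perm (Fin M), ∃ γ : ℝ,
    (γ = 1 ∨ γ = -1) ∧ ∀ k, Ψ k = Matrix.toEuclideanLin U (modulatedHTF N M γ (σ k))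

/-!
For `N ≥ 2`, Parseval's identity forces the common inner product of a restricted equiangular tight
frame of `N + 1` vectors to be `-1 / N`, so its Gram matrix is that of a regular simplex.
Conversely, unit vectors with this Gram matrix attain the minimum `M² / N` of the frame potential
and are therefore tight. The inner products of the harmonic frame are values
`sin (N θ) / (N sin θ)` of the Dirichlet kernel at multiples of `π / (N + 1)`, namely `± 1 / N`;
the modulation `(-1)^k` makes all the signs negative. Two tight frames `F`, `G` with the same Gram
matrix differ by the orthogonal matrix `(N / M) Gᵀ F`, and the simplex Gram matrix is invariant
under permutations of the indices.
-/

open Matrix Real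

section Matrices

open scoped ComplexOrder

theorem eq_smul_one_of_trace_mul_self_eq {n 𝕜 : Type*} [Fintype n] [DecidableEq n] [RCLike 𝕜]
    {S : Matrix n n 𝕜} (hS : S.IsHermitian)
    (h : (S * S).trace = S.trace ^ 2 / Fintype.card n) :
    S = (S.trace / Fintype.card n) • (1 : Matrix n n 𝕜) := by
  cases isEmpty_or_nonempty n
  · exact Subsingleton.elim _ _
  have hcard : (Fintype.card n : 𝕜) ≠ 0 := Nat.cast_ne_zero.mpr Fintype.card_ne_zero
  set t : 𝕜 := S.trace / Fintype.card n with ht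
  have htr : S.trace = Fintype.card n * t := by rw [ht]; field_simp
  have hstar : star t = t := by
    rw [ht, star_div₀, ← trace_conjTranspose, hS.eq, star_natCast]
  have hherm : (S - t • (1 : Matrix n n 𝕜))ᴴ = S - t • 1 := by
    rw [conjTranspose_sub, conjTranspose_smul, conjTranspose_one, hS.eq, hstar]
  rw [← sub_eq_zero, ← trace_conjTranspose_mul_self_eq_zero_iff, hherm]
  simp only [sub_mul, mul_sub, smul_mul_assoc, mul_smul_comm, mul_one, one_mul, trace_sub,
    trace_smul, trace_one, smul_eq_mul, h, htr]
  field_simp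
  ring

theorem exists_mem_orthogonalGroup_eq_mul_transpose {m n K : Type*} [Fintype m] [Fintype n]
    [DecidableEq n] [Field K] {A B : Matrix m n K} {a : K} (ha : a ≠ 0)
    (hA : Aᵀ * A = a • (1 : Matrix n n K)) (hB : Bᵀ * B = a • (1 : Matrix n n K))
    (h : A * Aᵀ = B * Bᵀ) : ∃ U ∈ orthogonalGroup n K, B = A * Uᵀ := by
  refine ⟨a⁻¹ • (Bᵀ * A), ?_, ?_⟩
  · rw [mem_orthogonalGroup_iff']
    calc (a⁻¹ • (Bᵀ * A))ᵀ * (a⁻¹ • (Bᵀ * A))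
        = (a⁻¹ * a⁻¹) • (Aᵀ * (B * Bᵀ) * A) := by
          simp only [transpose_smul, transpose_mul, transpose_transpose, smul_mul_assoc,
            mul_smul_comm, smul_smul, Matrix.mul_assoc]
      _ = (a⁻¹ * a⁻¹) • (Aᵀ * A * (Aᵀ * A)) := by simp only [← h, Matrix.mul_assoc]
      _ = 1 := by
          rw [hA, smul_mul_smul_comm, one_mul, smul_smul, mul_mul_mul_comm, inv_mul_cancel₀ ha,
            one_mul, one_smul]
  · calc B = a⁻¹ • (B * (Bᵀ * B)) := by
          rw [hB, Matrix.mul_smul, Matrix.mul_one, smul_smul, inv_mul_cancel₀ ha, one_smul]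
      _ = A * (a⁻¹ • (Bᵀ * A))ᵀ := by
          rw [← Matrix.mul_assoc, ← h, Matrix.mul_assoc, ← Matrix.mul_smul, transpose_smul,
            transpose_mul, transpose_transpose]

end Matrices

section UnitNormTightFrames

variable {M N : ℕ} {Φ Ψ : Fin M → EuclideanSpace ℝ (Fin N)}

theorem gram_eq_analysisMatrix_mul_transpose (Φ : Fin M → EuclideanSpace ℝ (Fin N)) :
    gram ℝ Φ = analysisMatrix Φ * (analysisMatrix Φ)ᵀ := by
  ext k l
  simp [analysisMatrix, mul_apply, PiLp.inner_apply, mul_comm]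

theorem analysisMatrix_toEuclideanLin_comp {K : ℕ} (U : Matrix (Fin K) (Fin N) ℝ)
    (Φ : Fin M → EuclideanSpace ℝ (Fin N)) :
    analysisMatrix (fun k => toEuclideanLin U (Φ k)) = analysisMatrix Φ * Uᵀ := by
  ext k i
  simp [analysisMatrix, mul_apply, mulVec, dotProduct, mul_comm]

theorem analysisMatrix_injective :
    Function.Injective (analysisMatrix (M := M) (N := N)) := by
  intro Φ Ψ h
  ext k i
  exact congrFun₂ h k i

theorem gram_toEuclideanLin_comp {U : Matrix (Fin N) (Fin N) ℝ}
    (hU : U ∈ orthogonalGroup (Fin N) ℝ) (Φ : Fin M → EuclideanSpace ℝ (Fin N)) :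
    gram ℝ (fun k => toEuclideanLin U (Φ k)) = gram ℝ Φ := by
  rw [gram_eq_analysisMatrix_mul_transpose, gram_eq_analysisMatrix_mul_transpose,
    analysisMatrix_toEuclideanLin_comp, transpose_mul, transpose_transpose, Matrix.mul_assoc,
    ← Matrix.mul_assoc Uᵀ, (mem_orthogonalGroup_iff' _ _).mp hU, Matrix.one_mul]

theorem IsUNTF.exists_orthogonal_of_gram_eq (hM : M ≠ 0) (hN : N ≠ 0) (hΦ : IsUNTF Φ)
    (hΨ : IsUNTF Ψ) (h : gram ℝ Φ = gram ℝ Ψ) :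
    ∃ U ∈ orthogonalGroup (Fin N) ℝ, ∀ k, Ψ k = toEuclideanLin U (Φ k) := by
  have ha : (M : ℝ) / N ≠ 0 := by positivity
  simp only [gram_eq_analysisMatrix_mul_transpose] at h
  obtain ⟨U, hU, hΨU⟩ := exists_mem_orthogonalGroup_eq_mul_transpose ha hΦ.2 hΨ.2 h
  rw [← analysisMatrix_toEuclideanLin_comp] at hΨU
  exact ⟨U, hU, congrFun (analysisMatrix_injective hΨU)⟩

theorem IsUNTF.inner_self (h : IsUNTF Φ) (k : Fin M) : inner ℝ (Φ k) (Φ k) = (1 : ℝ) := by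
  rw [real_inner_self_eq_norm_sq, h.1, one_pow]

theorem IsUNTF.sum_inner_sq (h : IsUNTF Φ) (x : EuclideanSpace ℝ (Fin N)) :
    ∑ k, inner ℝ (Φ k) x ^ 2 = (M : ℝ) / N * inner ℝ x x := by
  have hFx : ∀ k, inner ℝ (Φ k) x = (analysisMatrix Φ *ᵥ x) k := fun k => by
    simp [analysisMatrix, mulVec, dotProduct, PiLp.inner_apply, mul_comm]
  calc ∑ k, inner ℝ (Φ k) x ^ 2
      = (analysisMatrix Φ *ᵥ x) ⬝ᵥ (analysisMatrix Φ *ᵥ x) := by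
        simp only [hFx, dotProduct, sq]
    _ = x ⬝ᵥ ((analysisMatrix Φ)ᵀ * analysisMatrix Φ) *ᵥ x := by
        rw [← mulVec_mulVec, dotProduct_mulVec _ (analysisMatrix Φ)ᵀ, vecMul_transpose]
    _ = (M : ℝ) / N * inner ℝ x x := by
        rw [h.2, smul_mulVec, one_mulVec, dotProduct_smul, smul_eq_mul,
          EuclideanSpace.inner_eq_star_dotProduct, star_trivial]

/-- Equality case of the Benedetto–Fickus (Welch) lower bound for the frame potential. -/
theorem isUNTF_of_sum_sum_inner_sq_eq (hnorm : ∀ k, ‖Φ k‖ = 1)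
    (h : ∑ k, ∑ l, inner ℝ (Φ k) (Φ l) ^ 2 = (M : ℝ) ^ 2 / N) : IsUNTF Φ := by
  set F := analysisMatrix Φ
  have hG : gram ℝ Φ = F * Fᵀ := gram_eq_analysisMatrix_mul_transpose Φ
  have htr : (Fᵀ * F).trace = M := by
    rw [trace_mul_comm, ← hG]
    simp [trace, hnorm]
  have htr_sq : (Fᵀ * F * (Fᵀ * F)).trace = (M : ℝ) ^ 2 / N := by
    calc (Fᵀ * F * (Fᵀ * F)).trace
        = (gram ℝ Φ * gram ℝ Φ).trace := by
          rw [hG, Matrix.mul_assoc, trace_mul_comm, Matrix.mul_assoc, Matrix.mul_assoc,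
            Matrix.mul_assoc]
      _ = (M : ℝ) ^ 2 / N := by
          rw [← h]
          simp only [trace, diag_apply, mul_apply, gram_apply, sq, real_inner_comm]
  have hsymm : (Fᵀ * F).IsHermitian := isHermitian_conjTranspose_mul_self F
  have hscalar := eq_smul_one_of_trace_mul_self_eq hsymm
    (by rw [htr, htr_sq, Fintype.card_fin])
  rw [htr, Fintype.card_fin] at hscalar
  exact ⟨hnorm, hscalar⟩

end UnitNormTightFrames

section RestrictedETF

variable {M N : ℕ}

theorem IsRestrictedETF.exists_pairwise_inner_eq {Φ : Fin M → EuclideanSpace ℝ (Fin N)}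
    (h : IsRestrictedETF Φ) : ∃ c : ℝ, Pairwise fun k l => inner ℝ (Φ k) (Φ l) = c := by
  obtain ⟨-, c, hc⟩ := h
  refine ⟨c, fun k l hkl => ?_⟩
  rcases hkl.lt_or_gt with hlt | hlt
  · exact hc k l hlt
  · rw [real_inner_comm, hc l k hlt]

theorem IsUNTF.ne_one_of_pairwise_inner_eq (hM : M ≠ 0) (hN : N ≠ 1)
    {Φ : Fin M → EuclideanSpace ℝ (Fin N)} (h : IsUNTF Φ) {c : ℝ}
    (hc : Pairwise fun k l => inner ℝ (Φ k) (Φ l) = c) : c ≠ 1 := by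
  rintro rfl
  let k : Fin M := ⟨0, Nat.pos_of_ne_zero hM⟩
  have hall : ∀ j, inner ℝ (Φ j) (Φ k) = (1 : ℝ) := fun j => by
    obtain hj | hj := eq_or_ne j k
    · rw [hj, h.inner_self]
    · exact hc hj
  have hparseval : (M : ℝ) = M / N := by simpa [hall, h.1] using h.sum_inner_sq (Φ k)
  rw [eq_comm, div_eq_mul_inv, mul_eq_left₀ (Nat.cast_ne_zero.mpr hM), inv_eq_one,
    Nat.cast_eq_one] at hparseval
  exact hN hparseval

theorem IsUNTF.eq_one_sub_of_pairwise_inner_eq (hM : 2 ≤ M) (hN : N ≠ 1)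
    {Φ : Fin M → EuclideanSpace ℝ (Fin N)} (h : IsUNTF Φ) {c : ℝ}
    (hc : Pairwise fun k l => inner ℝ (Φ k) (Φ l) = c) : c = 1 - (M : ℝ) / N := by
  obtain ⟨k, l, hkl⟩ : ∃ k l : Fin M, k ≠ l := ⟨⟨0, by omega⟩, ⟨1, by omega⟩, by simp⟩
  -- Only the terms `j = k` and `j = l` of `∑ j, ⟪Φ j, Φ k - Φ l⟫ ^ 2` survive.
  have hparseval := h.sum_inner_sq (Φ k - Φ l)
  rw [Fintype.sum_eq_add k l hkl fun j hj => by
    rw [inner_sub_right, hc hj.1, hc hj.2, sub_self, zero_pow two_ne_zero]] at hparseval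
  have hklc : inner ℝ (Φ k) (Φ l) = c := hc hkl
  have hlkc : inner ℝ (Φ l) (Φ k) = c := hc hkl.symm
  simp only [inner_sub_right, inner_sub_left, h.inner_self, hklc, hlkc] at hparseval
  have hc1 : 1 - c ≠ 0 :=
    sub_ne_zero.mpr (h.ne_one_of_pairwise_inner_eq (by omega) hN hc).symm
  have hquadratic : (1 - c) * (1 - c - (M : ℝ) / N) = 0 := by
    linear_combination hparseval / 2
  linear_combination -(mul_eq_zero.mp hquadratic).resolve_left hc1

end RestrictedETF

section Simplex

/-- The Gram matrix of the vertices of a regular simplex of dimension `N` inscribed in the unit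
sphere, with which the restricted equiangular tight frames of `N + 1` vectors are characterised. -/
noncomputable def simplexGram (N : ℕ) : Matrix (Fin (N + 1)) (Fin (N + 1)) ℝ :=
  of fun k l => if k = l then 1 else -(N : ℝ)⁻¹

variable {N : ℕ}

theorem simplexGram_submatrix (σ : Equiv.Perm (Fin (N + 1))) :
    (simplexGram N).submatrix σ σ = simplexGram N := by
  ext k l
  simp [simplexGram]

theorem sum_sum_simplexGram_sq (hN : N ≠ 0) :
    ∑ k, ∑ l, simplexGram N k l ^ 2 = ((N + 1 : ℕ) : ℝ) ^ 2 / N := by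
  have hrow : ∀ k, ∑ l, simplexGram N k l ^ 2 = 1 + N * (N : ℝ)⁻¹ ^ 2 := fun k => by
    rw [Fin.sum_univ_succAbove _ k]
    simp [simplexGram, (Fin.succAbove_ne k _).symm]
  simp only [hrow, Finset.sum_const, Finset.card_univ, Fintype.card_fin, nsmul_eq_mul]
  push_cast
  field_simp

theorem isRestrictedETF_of_gram_eq_simplexGram (hN : N ≠ 0)
    {Φ : Fin (N + 1) → EuclideanSpace ℝ (Fin N)} (h : gram ℝ Φ = simplexGram N) :
    IsRestrictedETF Φ := by
  have hinner : ∀ k l, inner ℝ (Φ k) (Φ l) = simplexGram N k l := fun k l => congrFun₂ h k l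
  have hnorm : ∀ k, ‖Φ k‖ = 1 := fun k => by
    rw [norm_eq_sqrt_real_inner, hinner, simplexGram, of_apply, if_pos rfl, sqrt_one]
  refine ⟨isUNTF_of_sum_sum_inner_sq_eq hnorm ?_, -(N : ℝ)⁻¹, fun l k hlk => ?_⟩
  · simp only [hinner, sum_sum_simplexGram_sq hN]
  · rw [hinner, simplexGram, of_apply, if_neg hlk.ne]

theorem IsRestrictedETF.gram_eq_simplexGram (hN : 2 ≤ N)
    {Φ : Fin (N + 1) → EuclideanSpace ℝ (Fin N)} (h : IsRestrictedETF Φ) :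
    gram ℝ Φ = simplexGram N := by
  obtain ⟨c, hc⟩ := h.exists_pairwise_inner_eq
  have hcN : c = -(N : ℝ)⁻¹ := by
    rw [h.1.eq_one_sub_of_pairwise_inner_eq (by omega) (by omega) hc]
    push_cast
    field_simp
    ring
  ext k l
  simp only [gram_apply, simplexGram, of_apply]
  split_ifs with hkl
  · rw [hkl, h.1.inner_self]
  · rw [hc hkl, hcN]

end Simplex

section HarmonicTightFrame

theorem sin_mul_sum_two_mul_cos (r θ : ℝ) (m : ℕ) :
    sin θ * ∑ j ∈ Finset.range m, 2 * cos ((r + 2 * j + 1) * θ) =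
      sin ((r + 2 * m) * θ) - sin (r * θ) := by
  have htelescope : ∀ j : ℕ, sin θ * (2 * cos ((r + 2 * j + 1) * θ)) =
      sin ((r + 2 * (j + 1 : ℕ)) * θ) - sin ((r + 2 * j) * θ) := fun j => by
    rw [sin_sub_sin]
    push_cast
    ring_nf
  rw [Finset.mul_sum, Finset.sum_congr rfl fun j _ => htelescope j,
    Finset.sum_range_sub (fun j : ℕ => sin ((r + 2 * j) * θ))]
  simp

variable {M : ℕ}

theorem htf_even_castAdd (m : ℕ) (k : Fin M) (j : Fin m) :
    htf (m + m) M k (Fin.castAdd m j) = √(2 / (m + m : ℕ)) * cos ((2 * j + 1) * k * π / M) := by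
  have hhalf : (m + m) / 2 = m := by omega
  simp [htf, hhalf]

theorem htf_even_natAdd (m : ℕ) (k : Fin M) (j : Fin m) :
    htf (m + m) M k (Fin.natAdd m j) = √(2 / (m + m : ℕ)) * sin ((2 * j + 1) * k * π / M) := by
  have hhalf : (m + m) / 2 = m := by omega
  simp [htf, hhalf]

theorem htf_odd_zero (m : ℕ) (k : Fin M) :
    htf (m + m + 1) M k 0 = √(2 / (m + m + 1 : ℕ)) * (1 / √2) := by
  simp [htf, parity_simps]

theorem htf_odd_succ_castAdd (m : ℕ) (k : Fin M) (j : Fin m) :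
    htf (m + m + 1) M k (Fin.castAdd m j).succ =
      √(2 / (m + m + 1 : ℕ)) * cos (2 * (j + 1) * k * π / M) := by
  have hhalf : (m + m) / 2 = m := by omega
  have hj : (j : ℕ) + 1 ≤ m := j.isLt
  simp [htf, parity_simps, hhalf, hj]

theorem htf_odd_succ_natAdd (m : ℕ) (k : Fin M) (j : Fin m) :
    htf (m + m + 1) M k (Fin.natAdd m j).succ =
      √(2 / (m + m + 1 : ℕ)) * sin (2 * (j + 1) * k * π / M) := by
  have hhalf : (m + m) / 2 = m := by omega
  have hj : (j : ℕ) + m + 1 - m = j + 1 := by omega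
  simp [htf, parity_simps, hhalf, hj]

theorem mul_sqrt_two_div_sq {x : ℝ} (hx : 0 < x) : x * √(2 / x) ^ 2 = 2 := by
  rw [sq_sqrt (by positivity)]
  field_simp

theorem mul_cos_mul_cos_add_sin_mul_sin {x : ℝ} (hx : 0 < x) (α β : ℝ) :
    x * (√(2 / x) * cos α * (√(2 / x) * cos β) + √(2 / x) * sin α * (√(2 / x) * sin β)) =
      2 * cos (β - α) := by
  rw [cos_sub]
  linear_combination (cos α * cos β + sin α * sin β) * mul_sqrt_two_div_sq hx

theorem natCast_mul_inner_htf_even (m : ℕ) (k l : Fin M) :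
    ((m + m : ℕ) : ℝ) * inner ℝ (htf (m + m) M k) (htf (m + m) M l) =
      ∑ j ∈ Finset.range m, 2 * cos ((2 * j + 1) * (((k : ℝ) - l) * π / M)) := by
  simp only [PiLp.inner_apply, Fin.sum_univ_add, htf_even_castAdd, htf_even_natAdd,
    ← Finset.sum_add_distrib, Finset.mul_sum, RCLike.inner_apply, conj_trivial, Finset.sum_range]
  refine Finset.sum_congr rfl fun j _ => ?_
  have hm : 0 < m := j.pos
  rw [mul_cos_mul_cos_add_sin_mul_sin (by positivity)]
  ring_nf

theorem natCast_mul_inner_htf_odd (m : ℕ) (k l : Fin M) :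
    ((m + m + 1 : ℕ) : ℝ) * inner ℝ (htf (m + m + 1) M k) (htf (m + m + 1) M l) =
      1 + ∑ j ∈ Finset.range m, 2 * cos (2 * (j + 1) * (((k : ℝ) - l) * π / M)) := by
  have hN : (0 : ℝ) < (m + m + 1 : ℕ) := by positivity
  simp only [PiLp.inner_apply, Fin.sum_univ_succ, Fin.sum_univ_add, htf_odd_zero,
    htf_odd_succ_castAdd, htf_odd_succ_natAdd, ← Finset.sum_add_distrib, RCLike.inner_apply,
    conj_trivial, Finset.sum_range]
  rw [mul_add, Finset.mul_sum]
  congr 1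
  · have hsqrt : (1 / √2) ^ 2 = 1 / 2 := by rw [div_pow, one_pow, sq_sqrt zero_le_two]
    linear_combination (1 / √2) ^ 2 * mul_sqrt_two_div_sq hN + 2 * hsqrt
  · refine Finset.sum_congr rfl fun j _ => ?_
    rw [mul_cos_mul_cos_add_sin_mul_sin hN]
    ring_nf

theorem inner_htf_self {N : ℕ} (hN : N ≠ 0) (k : Fin M) :
    inner ℝ (htf N M k) (htf N M k) = (1 : ℝ) := by
  refine mul_left_cancel₀ (Nat.cast_ne_zero.mpr hN) ?_
  obtain ⟨m, rfl | rfl⟩ := N.even_or_odd'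
  · rw [two_mul, natCast_mul_inner_htf_even]
    simp only [sub_self, zero_mul, zero_div, mul_zero, cos_zero, mul_one, Finset.sum_const,
      Finset.card_range, nsmul_eq_mul, Nat.cast_add]
    ring
  · rw [two_mul, natCast_mul_inner_htf_odd]
    simp only [sub_self, zero_mul, zero_div, mul_zero, cos_zero, mul_one, Finset.sum_const,
      Finset.card_range, nsmul_eq_mul, Nat.cast_add, Nat.cast_one]
    ring

theorem sin_mul_natCast_mul_inner_htf (N : ℕ) (k l : Fin M) :
    sin (((k : ℝ) - l) * π / M) * (N * inner ℝ (htf N M k) (htf N M l)) =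
      sin (N * (((k : ℝ) - l) * π / M)) := by
  set θ := ((k : ℝ) - l) * π / M
  obtain ⟨m, rfl | rfl⟩ := N.even_or_odd'
  · have hsum := sin_mul_sum_two_mul_cos 0 θ m
    simp only [zero_add, zero_mul, sin_zero, sub_zero] at hsum
    rw [two_mul, natCast_mul_inner_htf_even, hsum]
    push_cast
    ring_nf
  · have hsum := sin_mul_sum_two_mul_cos 1 θ m
    have hfreq : ∀ j : ℕ, (2 * (j + 1) : ℝ) = 1 + 2 * j + 1 := fun j => by ring
    rw [two_mul, natCast_mul_inner_htf_odd]
    simp only [hfreq]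
    rw [mul_add, hsum]
    push_cast
    ring_nf

theorem sin_sub_mul_pi_div_ne_zero {k l : Fin M} (hkl : k ≠ l) :
    sin (((k : ℝ) - l) * π / M) ≠ 0 := by
  have hM : (0 : ℝ) < M := Nat.cast_pos.mpr k.pos
  have hsub : (k : ℝ) - l ≠ 0 := by
    rw [sub_ne_zero, Ne, Nat.cast_inj]
    exact Fin.val_ne_of_ne hkl
  have hsub_lt : |(k : ℝ) - l| < M :=
    abs_sub_lt_of_nonneg_of_lt k.val.cast_nonneg (Nat.cast_lt.mpr k.isLt)
      l.val.cast_nonneg (Nat.cast_lt.mpr l.isLt)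
  have habs : |((k : ℝ) - l) * π / M| < π := by
    rw [abs_div, abs_mul, abs_of_pos pi_pos, abs_of_pos hM, div_lt_iff₀ hM, mul_comm π]
    gcongr
  obtain ⟨hlower, hupper⟩ := abs_lt.mp habs
  rw [Ne, sin_eq_zero_iff_of_lt_of_lt hlower hupper]
  positivity

theorem natCast_mul_inner_htf_of_ne {N : ℕ} {k l : Fin (N + 1)} (hkl : k ≠ l) :
    N * inner ℝ (htf N (N + 1) k) (htf N (N + 1) l) = -((-1 : ℝ) ^ (k : ℕ) * (-1) ^ (l : ℕ)) := by
  refine mul_left_cancel₀ (sin_sub_mul_pi_div_ne_zero hkl) ?_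
  rw [sin_mul_natCast_mul_inner_htf]
  -- The Dirichlet kernel `sin (N θ) / sin θ` is a sign because `(N + 1) θ` is in `ℤ π`.
  set θ := ((k : ℝ) - l) * π / (N + 1 : ℕ) with hθ
  have hNθ : N * θ = k * π - (θ + l * π) := by
    rw [hθ]
    push_cast
    field_simp
    ring
  rw [hNθ, sin_nat_mul_pi_sub, sin_add_nat_mul_pi]
  ring

theorem gram_modulatedHTF {N : ℕ} (hN : N ≠ 0) {γ : ℝ} (hγ : γ = 1 ∨ γ = -1) :
    gram ℝ (modulatedHTF N (N + 1) γ) = simplexGram N := by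
  have hγ_sq : γ ^ 2 = 1 := sq_eq_one_iff.mpr hγ
  have hsign_sq : ∀ n : ℕ, ((-1 : ℝ) ^ n) ^ 2 = 1 := fun n => by
    rw [← pow_mul, mul_comm, pow_mul, neg_one_sq, one_pow]
  have hN0 : (N : ℝ) ≠ 0 := Nat.cast_ne_zero.mpr hN
  ext k l
  simp only [gram_apply, modulatedHTF, real_inner_smul_left, real_inner_smul_right, simplexGram,
    of_apply]
  split_ifs with hkl
  · rw [hkl, inner_htf_self hN]
    linear_combination ((-1 : ℝ) ^ ((l : ℕ) + 1)) ^ 2 * hγ_sq + hsign_sq ((l : ℕ) + 1)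
  · refine mul_left_cancel₀ hN0 ?_
    have hinner := natCast_mul_inner_htf_of_ne hkl
    rw [mul_neg, mul_inv_cancel₀ hN0, pow_succ, pow_succ]
    linear_combination γ ^ 2 * (-1) ^ (k : ℕ) * (-1) ^ (l : ℕ) * hinner
      - ((-1 : ℝ) ^ (k : ℕ)) ^ 2 * ((-1 : ℝ) ^ (l : ℕ)) ^ 2 * hγ_sq
      - ((-1 : ℝ) ^ (l : ℕ)) ^ 2 * hsign_sq k - hsign_sq l

theorem isEquivModulatedHTF_iff_gram_eq_simplexGram {N : ℕ} (hN : N ≠ 0)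
    {Ψ : Fin (N + 1) → EuclideanSpace ℝ (Fin N)} :
    IsEquivModulatedHTF Ψ ↔ gram ℝ Ψ = simplexGram N := by
  constructor
  · rintro ⟨U, hU, σ, γ, hγ, hΨ⟩
    calc gram ℝ Ψ
        = gram ℝ (fun k => toEuclideanLin U (modulatedHTF N (N + 1) γ (σ k))) := by
          rw [funext hΨ]
      _ = (gram ℝ (modulatedHTF N (N + 1) γ)).submatrix σ σ := gram_toEuclideanLin_comp hU _
      _ = simplexGram N := by rw [gram_modulatedHTF hN hγ, simplexGram_submatrix]
  · intro hΨ
    have hH : gram ℝ (modulatedHTF N (N + 1) 1) = simplexGram N :=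
      gram_modulatedHTF hN (Or.inl rfl)
    obtain ⟨U, hU, hΨU⟩ :=
      (isRestrictedETF_of_gram_eq_simplexGram hN hH).1.exists_orthogonal_of_gram_eq
        N.succ_ne_zero hN (isRestrictedETF_of_gram_eq_simplexGram hN hΨ).1 (hH.trans hΨ.symm)
    exact ⟨U, hU, 1, 1, Or.inl rfl, hΨU⟩

end HarmonicTightFrame

theorem stmt1 (N M : ℕ) (hN : 1 ≤ N) (hM : M = N + 1)
    (Ψ : Fin M → EuclideanSpace ℝ (Fin N)) :
    (IsEquivModulatedHTF Ψ → IsRestrictedETF Ψ) ∧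
      (2 ≤ N → (IsRestrictedETF Ψ ↔ IsEquivModulatedHTF Ψ)) := by
  subst hM
  have hN0 : N ≠ 0 := Nat.one_le_iff_ne_zero.mp hN
  rw [isEquivModulatedHTF_iff_gram_eq_simplexGram hN0]
  exact ⟨isRestrictedETF_of_gram_eq_simplexGram hN0, fun hN2 =>
    ⟨fun h => h.gram_eq_simplexGram hN2, isRestrictedETF_of_gram_eq_simplexGram hN0⟩⟩
end

section
/- A composition $m=(m_1,\dots,m_K)$ of $M$ is a tuple of positive integers with sum $M$; put $M_i=m_1+\dots+m_i$ and $I_i=\{M_{i-1}+1,\dots,M_i\}$. Let $D(m)$ be the matrix whose rows are $e_k^T-e_\ell^T$ for all pairs $k\in I_i$, $\ell\in I_{i+1}$, $1\le i\le K-1$, and let $\tilde D(m)$ be $D(m)$ stacked above the rows $e_k^T$, $k\in I_{K-1}$ (no rows if $K=1$). A Variant II initial codeword compatible with $m$ is a vector $\hat y_{\mathrm{init}}=(\mu_1,\dots,\mu_1,\dots,\mu_K,\dots,\mu_K)\in\mathbb R^M$ with $\mu_i$ appearing $m_i$ times and $\mu_1>\mu_2>\dots>\mu_K\ge 0$. Let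 $\mathcal Q(m)$ be the set of $M\times M$ diagonal matrices with diagonal entries $\pm1$ whose last $m_K$ diagonal entries equal $+1$. Let $M\ge 3$, let $F\in\mathbb R^{M\times N}$ be a frame analysis operator (that is, $\operatorname{rank}F=N$), let $R\in\mathbb R^{N\times M}$, and put $A=FR$. Suppose that $$\tilde D(m)\,V P A P^{-1} V\,\hat y_{\mathrm{init}}\ \ge\ 0\quad\text{(elementwise)}$$ for every composition $m$ of $M$, every Variant II initial codeword $\hat y_{\mathrm{init}}$ compatible with $m$, every $M\times M$ permutation matrix $P$, and every $V\in\mathcal Q(m)$. (That is, the linear reconstruction $\hat x=R\hat y$ satisfies the consistency inequalities of Variant II frame permutation quantization for every composition, compatible initial codeword and encoding $(P,V)$.) Then $A=aI_M$ for some $a\ge 0$, and, provided $R\ne 0$, $M=N$. -/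
/-!
A single composition with at least three blocks already forces `A = a I`. The consistency
inequalities are closed conditions, so they persist for codewords that are merely antitone and
nonnegative. Take first the indicator of `I_1`, with signs on `I_1` opposite to those of a row of
`P A P⁻¹` indexed by `k ∈ I_{K-1}`: the row `e_k` of `D̃(m)` then says that minus the sum of the
absolute values of the entries of this row in the columns `I_1` is nonnegative, so these entries
vanish. As `k ∉ I_1`, conjugating by permutations moves them to every off-diagonal position. Next
take the constant codeword `1`: for a diagonal `A` the rows of `D̃(m)` say that the diagonal entries
are nonnegative and nonincreasing from block to block in every order, hence all equal.
-/

/-- The differencing matrix `D(m)`: one row `e_k - e_ℓ` for every pair `(k, ℓ)` with `k ∈ I_i`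
and `ℓ ∈ I_{i+1}` for some `i`. Here `c.index k` is the (zero-based) number of the block of the
composition `c` that contains the position `k`. -/
def diffMatrix {M : ℕ} (c : Composition M) :
    Matrix {p : Fin M × Fin M // (c.index p.1 : ℕ) + 1 = (c.index p.2 : ℕ)} (Fin M) ℝ :=
  Matrix.of fun p => Pi.single p.1.1 1 - Pi.single p.1.2 1

/-- The augmented matrix `D̃(m)`: `D(m)` stacked above the rows `e_k` for `k ∈ I_{K-1}`, the
second-to-last block. For `K = 1` there is no such block and `D̃(m)` has no rows. -/
def augDiffMatrix {M : ℕ} (c : Composition M) :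
    Matrix ({p : Fin M × Fin M // (c.index p.1 : ℕ) + 1 = (c.index p.2 : ℕ)} ⊕
      {k : Fin M // (c.index k : ℕ) + 2 = c.length}) (Fin M) ℝ :=
  Matrix.fromRows (diffMatrix c) (Matrix.of fun k => Pi.single k.1 1)

/-- `y` is a Variant II initial codeword compatible with the composition `c`: it is
`(μ_1, …, μ_1, …, μ_K, …, μ_K)` with `μ_i` repeated `m_i` times and `μ_1 > ⋯ > μ_K ≥ 0`. -/
def IsVariantIICodeword {M : ℕ} (c : Composition M) (y : Fin M → ℝ) : Prop :=
  ∃ μ : Fin c.length → ℝ, StrictAnti μ ∧ (∀ i, 0 ≤ μ i) ∧ ∀ k, y k = μ (c.index k)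

/-- The set `𝒬(m)` of sign-changing matrices: diagonal matrices with diagonal entries `±1`, equal
to `+1` at the positions of the last block of the composition. -/
def signMatrices {M : ℕ} (c : Composition M) : Set (Matrix (Fin M) (Fin M) ℝ) :=
  {V | ∃ ε : Fin M → ℝ, (∀ k, ε k = 1 ∨ ε k = -1) ∧
    (∀ k, (c.index k : ℕ) + 1 = c.length → ε k = 1) ∧ V = Matrix.diagonal ε}

open Matrix Topology

theorem exists_perm_apply_eq_and_apply_eq {α : Type*} {a b c d : α} (hab : a ≠ b) (hcd : c ≠ d) :
    ∃ σ : Equiv.Perm α, σ a = c ∧ σ b = d :=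
  MulAction.is_two_pretransitive_iff.mp (Equiv.Perm.isMultiplyPretransitive α 2) hab hcd

theorem eq_zero_of_forall_sign_sum_nonneg {ι R : Type*} [Ring R] [LinearOrder R]
    [IsOrderedAddMonoid R] {s : Finset ι} {a : ι → R}
    (h : ∀ ε : ι → R, (∀ i, ε i = 1 ∨ ε i = -1) → (∀ i ∉ s, ε i = 1) → 0 ≤ ∑ i ∈ s, ε i * a i)
    {i : ι} (hi : i ∈ s) : a i = 0 := by
  classical
  let ε (i : ι) : R := if i ∈ s ∧ 0 ≤ a i then -1 else 1
  have mul_eq (j) (hj : j ∈ s) : ε j * a j = -|a j| := by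
    rcases le_or_gt 0 (a j) with h | h
    · simp only [ε, hj, h, true_and, if_true, neg_one_mul, abs_of_nonneg h]
    · simp only [ε, hj, h.not_ge, true_and, if_false, one_mul, abs_of_neg h, neg_neg]
  have sum_nonneg := h ε (fun _ => (ite_eq_or_eq _ _ _).symm) fun j hj => if_neg fun h => hj h.1
  rw [Finset.sum_congr rfl mul_eq, Finset.sum_neg_distrib, neg_nonneg] at sum_nonneg
  have sum_eq_zero := sum_nonneg.antisymm (Finset.sum_nonneg fun _ _ => abs_nonneg _)
  exact abs_eq_zero.mp
    ((Finset.sum_eq_zero_iff_of_nonneg fun _ _ => abs_nonneg _).mp sum_eq_zero i hi)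

section Matrix

variable {l m n K : Type*}

theorem permMatrix_mul_mul_inv [Fintype m] [DecidableEq m] [CommRing K] (σ : Equiv.Perm m)
    (A : Matrix m m K) : σ.permMatrix K * A * (σ.permMatrix K)⁻¹ = A.submatrix σ σ := by
  have inv_eq : (σ.permMatrix K)⁻¹ = (σ⁻¹).permMatrix K :=
    inv_eq_right_inv (by rw [← permMatrix_mul, inv_mul_cancel, permMatrix_one])
  rw [inv_eq, Equiv.Perm.permMatrix, Equiv.Perm.permMatrix, PEquiv.toMatrix_toPEquiv_mul,
    PEquiv.mul_toMatrix_toPEquiv]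
  rfl

theorem eq_zero_of_mul_eq_zero_of_rank_eq_card [Field K] [Finite l] [Finite m] [Fintype n]
    {F : Matrix l n K} {R : Matrix n m K} (hF : F.rank = Fintype.card n) (hFR : F * R = 0) :
    R = 0 := by
  classical
  cases nonempty_fintype m
  have rank_R : R.rank = 0 := by
    have := rank_add_rank_le_card_of_mul_eq_zero hFR
    omega
  have mulVecLin_R : R.mulVecLin = 0 :=
    LinearMap.range_eq_bot.mp (Submodule.finrank_eq_zero.mp rank_R)
  exact ext_of_mulVec_single fun i => by
    rw [← mulVecLin_apply, mulVecLin_R, LinearMap.zero_apply, zero_mulVec]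

theorem card_eq_of_mul_eq_smul_one [Fintype m] [DecidableEq m] [Field K] [Fintype n]
    {F : Matrix m n K} {R : Matrix n m K} {a : K} (hF : F.rank = Fintype.card n) (hR : R ≠ 0)
    (hFR : F * R = a • 1) : Fintype.card m = Fintype.card n := by
  have ha : a ≠ 0 := by
    rintro rfl
    exact hR (eq_zero_of_mul_eq_zero_of_rank_eq_card hF (by rw [hFR, zero_smul]))
  have hFaR : F * (a⁻¹ • R) = 1 := by rw [Matrix.mul_smul, hFR, inv_smul_smul₀ ha]
  have card_le : Fintype.card m ≤ F.rank := by
    simpa only [hFaR, rank_one] using rank_mul_le_left F (a⁻¹ • R)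
  exact le_antisymm (card_le.trans hF.le) (hF ▸ F.rank_le_card_height)

end Matrix

section Composition

variable {M : ℕ} {c : Composition M}

theorem exists_index_eq (c : Composition M) {i : ℕ} (hi : i < c.length) :
    ∃ k, (c.index k : ℕ) = i :=
  ⟨c.embedding ⟨i, hi⟩ ⟨0, c.blocks_pos' i hi⟩, congrArg Fin.val (c.index_embedding ⟨i, hi⟩ _)⟩

theorem augDiffMatrix_mulVec_nonneg_iff {w : Fin M → ℝ} :
    0 ≤ augDiffMatrix c *ᵥ w ↔
      (∀ k l, (c.index k : ℕ) + 1 = c.index l → w l ≤ w k) ∧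
        ∀ k, (c.index k : ℕ) + 2 = c.length → 0 ≤ w k := by
  have apply_inl (p) : (augDiffMatrix c *ᵥ w) (.inl p) = w p.1.1 - w p.1.2 := by
    change (Pi.single p.1.1 1 - Pi.single p.1.2 1 : Fin M → ℝ) ⬝ᵥ w = _
    rw [sub_dotProduct, single_one_dotProduct, single_one_dotProduct]
  have apply_inr (k) : (augDiffMatrix c *ᵥ w) (.inr k) = w k := single_one_dotProduct k.1 w
  simp only [Pi.le_def, Sum.forall, Subtype.forall, Prod.forall, Pi.zero_apply, apply_inl,
    apply_inr, sub_nonneg]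

theorem comp_index_mem_closure_codewords {μ : Fin c.length → ℝ} (hμ : Antitone μ) (hμ₀ : 0 ≤ μ) :
    μ ∘ c.index ∈ closure {y | IsVariantIICodeword c y} := by
  let ν (t : ℝ) (i : Fin c.length) : ℝ := μ i - t * i + t * c.length
  have tendsto_ν : Filter.Tendsto (fun t k => ν t (c.index k)) (𝓝[>] 0) (𝓝 (μ ∘ c.index)) := by
    have continuous_ν : Continuous fun t k => ν t (c.index k) := by fun_prop
    simpa [ν, Function.comp_def] using (continuous_ν.tendsto 0).mono_left nhdsWithin_le_nhds
  refine mem_closure_of_tendsto tendsto_ν ?_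
  filter_upwards [self_mem_nhdsWithin] with t (ht : 0 < t)
  refine ⟨ν t, fun i j hij => ?_, fun i => ?_, fun _ => rfl⟩
  · have t_mul_lt : t * i < t * j := mul_lt_mul_of_pos_left (by exact_mod_cast hij) ht
    have μ_le : μ j ≤ μ i := hμ hij.le
    simp only [ν]
    linarith
  · have t_mul_le : t * i ≤ t * c.length :=
      mul_le_mul_of_nonneg_left (by exact_mod_cast i.isLt.le) ht.le
    have μ_nonneg : 0 ≤ μ i := hμ₀ i
    simp only [ν]
    linarith

/-- Consistency of the linear reconstruction with `A = F R` for the single composition `c`: the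
inequalities of Variant II hold for every compatible initial codeword and every encoding
`(P, V)`. -/
def IsConsistent (c : Composition M) (A : Matrix (Fin M) (Fin M) ℝ) : Prop :=
  ∀ y, IsVariantIICodeword c y → ∀ σ : Equiv.Perm (Fin M), ∀ V ∈ signMatrices c,
    0 ≤ (augDiffMatrix c * V * σ.permMatrix ℝ * A * (σ.permMatrix ℝ)⁻¹ * V) *ᵥ y

namespace IsConsistent

variable {A : Matrix (Fin M) (Fin M) ℝ}

theorem augDiffMatrix_mulVec_nonneg (hA : IsConsistent c A) {μ : Fin c.length → ℝ}
    (hμ : Antitone μ) (hμ₀ : 0 ≤ μ) (σ : Equiv.Perm (Fin M)) {ε : Fin M → ℝ}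
    (hε : ∀ k, ε k = 1 ∨ ε k = -1) (hε_last : ∀ k, (c.index k : ℕ) + 1 = c.length → ε k = 1) :
    0 ≤ augDiffMatrix c *ᵥ (ε * (A.submatrix σ σ *ᵥ (ε * (μ ∘ c.index)))) := by
  let B := augDiffMatrix c * diagonal ε * A.submatrix σ σ * diagonal ε
  have isClosed_B : IsClosed {y | 0 ≤ B *ᵥ y} := isClosed_le (by fun_prop) (by fun_prop)
  have codeword_mem (y) (hy : IsVariantIICodeword c y) : 0 ≤ B *ᵥ y := by
    simpa only [B, ← permMatrix_mul_mul_inv, Matrix.mul_assoc] using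
      hA y hy σ _ ⟨ε, hε, hε_last, rfl⟩
  have diagonal_mulVec (v : Fin M → ℝ) : diagonal ε *ᵥ v = ε * v :=
    funext fun k => mulVec_diagonal ε v k
  have : 0 ≤ B *ᵥ (μ ∘ c.index) :=
    closure_minimal codeword_mem isClosed_B (comp_index_mem_closure_codewords hμ hμ₀)
  simpa only [B, ← mulVec_mulVec, diagonal_mulVec] using this

theorem apply_eq_zero_of_index_eq_zero (hA : IsConsistent c A) (σ : Equiv.Perm (Fin M))
    {k l : Fin M} (hk : (c.index k : ℕ) + 2 = c.length) (hk₀ : (c.index k : ℕ) ≠ 0)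
    (hl : (c.index l : ℕ) = 0) : A (σ k) (σ l) = 0 := by
  let μ (i : Fin c.length) : ℝ := if (i : ℕ) = 0 then 1 else 0
  have hμ : Antitone μ := by
    intro i j (hij : (i : ℕ) ≤ j)
    simp only [μ]
    split_ifs <;> first | omega | norm_num
  have hμ₀ : 0 ≤ μ := fun i => by
    simp only [μ]
    split_ifs <;> norm_num
  let s : Finset (Fin M) := {t | (c.index t : ℕ) = 0}
  have hs (t) : t ∈ s ↔ (c.index t : ℕ) = 0 := by simp only [s, Finset.mem_filter_univ]
  refine eq_zero_of_forall_sign_sum_nonneg (s := s) (a := fun t => A (σ k) (σ t))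
    (fun ε hε hε_off => ?_) ((hs l).mpr hl)
  have hε_last (t) (ht : (c.index t : ℕ) + 1 = c.length) : ε t = 1 :=
    hε_off t (by rw [hs]; omega)
  have row_nonneg : 0 ≤ ε k * ∑ t, A (σ k) (σ t) * (ε t * μ (c.index t)) :=
    (augDiffMatrix_mulVec_nonneg_iff.mp
      (hA.augDiffMatrix_mulVec_nonneg hμ hμ₀ σ hε hε_last)).2 k hk
  have row_eq : ∑ t, A (σ k) (σ t) * (ε t * μ (c.index t)) = ∑ t ∈ s, ε t * A (σ k) (σ t) := by
    simp only [s, μ, Finset.sum_filter, mul_ite, mul_one, mul_zero, ite_mul, zero_mul,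
      mul_comm (A _ _)]
  rwa [hε_off k (by rwa [hs]), one_mul, row_eq] at row_nonneg

theorem isDiag (hA : IsConsistent c A) (hc : 3 ≤ c.length) : A.IsDiag := by
  intro i j hij
  obtain ⟨k, hk⟩ := exists_index_eq c (i := c.length - 2) (by omega)
  obtain ⟨l, hl⟩ := exists_index_eq c (i := 0) (by omega)
  have hkl : k ≠ l := by
    rintro rfl
    omega
  obtain ⟨σ, rfl, rfl⟩ := exists_perm_apply_eq_and_apply_eq hkl hij
  exact hA.apply_eq_zero_of_index_eq_zero σ (by omega) (by omega) hl

theorem augDiffMatrix_mulVec_diag_nonneg (hA : IsConsistent c A) (hdiag : A.IsDiag)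
    (σ : Equiv.Perm (Fin M)) : 0 ≤ augDiffMatrix c *ᵥ (A.diag ∘ σ) := by
  have := hA.augDiffMatrix_mulVec_nonneg (μ := 1) antitone_const zero_le_one σ
    (fun _ => Or.inl rfl) (fun _ _ => rfl)
  rw [← hdiag.diagonal_diag, submatrix_diagonal_equiv] at this
  convert this using 2
  ext k
  simp [mulVec_diagonal]

theorem diag_nonneg (hA : IsConsistent c A) (hdiag : A.IsDiag) (hc : 2 ≤ c.length) (i : Fin M) :
    0 ≤ A i i := by
  obtain ⟨k, hk⟩ := exists_index_eq c (i := c.length - 2) (by omega)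
  have := (augDiffMatrix_mulVec_nonneg_iff.mp
    (hA.augDiffMatrix_mulVec_diag_nonneg hdiag (Equiv.swap k i))).2 k (by omega)
  simpa using this

theorem diag_le_diag (hA : IsConsistent c A) (hdiag : A.IsDiag) (hc : 2 ≤ c.length)
    {i j : Fin M} (hij : i ≠ j) : A j j ≤ A i i := by
  obtain ⟨k, hk⟩ := exists_index_eq c (i := 0) (by omega)
  obtain ⟨l, hl⟩ := exists_index_eq c (i := 1) (by omega)
  have hkl : k ≠ l := by
    rintro rfl
    omega
  obtain ⟨σ, rfl, rfl⟩ := exists_perm_apply_eq_and_apply_eq hkl hij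
  exact (augDiffMatrix_mulVec_nonneg_iff.mp (hA.augDiffMatrix_mulVec_diag_nonneg hdiag σ)).1 k l
    (by omega)

theorem exists_nonneg_eq_smul_one (hA : IsConsistent c A) (hc : 3 ≤ c.length) :
    ∃ a : ℝ, 0 ≤ a ∧ A = a • (1 : Matrix (Fin M) (Fin M) ℝ) := by
  have hdiag := hA.isDiag hc
  have hc₂ : 2 ≤ c.length := by omega
  obtain ⟨i, -⟩ := exists_index_eq c (i := 0) (by omega)
  have diag_eq (j) : A j j = A i i := by
    rcases eq_or_ne i j with rfl | hij
    · rfl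
    · exact (hA.diag_le_diag hdiag hc₂ hij).antisymm (hA.diag_le_diag hdiag hc₂ hij.symm)
  refine ⟨A i i, hA.diag_nonneg hdiag hc₂ i, ?_⟩
  rw [smul_one_eq_diagonal, ← hdiag.diagonal_diag]
  simp [diag_eq]

end IsConsistent

end Composition

theorem stmt6_general {M N : ℕ} {c : Composition M} (hc : 3 ≤ c.length)
    (F : Matrix (Fin M) (Fin N) ℝ) (hF : F.rank = N) (R : Matrix (Fin N) (Fin M) ℝ)
    (A : Matrix (Fin M) (Fin M) ℝ) (hA : A = F * R) (h : IsConsistent c A) :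
    (∃ a : ℝ, 0 ≤ a ∧ A = a • (1 : Matrix (Fin M) (Fin M) ℝ)) ∧ (R ≠ 0 → M = N) := by
  obtain ⟨a, ha, hAa⟩ := h.exists_nonneg_eq_smul_one hc
  refine ⟨⟨a, ha, hAa⟩, fun hR => ?_⟩
  simpa using card_eq_of_mul_eq_smul_one (by simpa using hF) hR (hA ▸ hAa)

open Matrix in
theorem stmt6 {M N : ℕ} (hM : 3 ≤ M)
    (F : Matrix (Fin M) (Fin N) ℝ) (hF : F.rank = N)
    (R : Matrix (Fin N) (Fin M) ℝ)
    (A : Matrix (Fin M) (Fin M) ℝ) (hA : A = F * R)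
    (h : ∀ (c : Composition M) (y : Fin M → ℝ), IsVariantIICodeword c y →
      ∀ (σ : Equiv.Perm (Fin M)) (P : Matrix (Fin M) (Fin M) ℝ), P = σ.permMatrix ℝ →
      ∀ V ∈ signMatrices c,
        0 ≤ (augDiffMatrix c * V * P * A * P⁻¹ * V) *ᵥ y) :
    (∃ a : ℝ, 0 ≤ a ∧ A = a • (1 : Matrix (Fin M) (Fin M) ℝ)) ∧ (R ≠ 0 → M = N) :=
  stmt6_general (c := Composition.ones M) (by rwa [Composition.ones_length]) F hF R A hA
    fun y hy σ V hV => h _ y hy σ _ rfl V hV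
end

section
/- Let $N\ge 2$, $M>N$ (so $M\ge 3$), and let $F\in\mathbb{R}^{M\times N}$ be the analysis operator of a unit-norm tight frame, i.e. every row of $F$ has Euclidean norm $1$ and $F^*F=\frac{M}{N}I_N$. Put $F^\dagger=(F^*F)^{-1}F^*$. For a composition $m=(m_1,\dots,m_K)$ of $M$ (positive integers with sum $M$), let $I_1,\dots,I_K$ be the consecutive blocks of $\{1,\dots,M\}$ of sizes $m_1,\dots,m_K$, and let $D(m)$ be the matrix whose rows are $e_k^T-e_\ell^T$ for all $k\in I_i$, $\ell\in I_{i+1}$, $1\le i\le K-1$. A Variant I initial codeword compatible with $m$ is a vector $\hat y_{\mathrm{init}}=(\mu_1,\dots,\mu_1,\dots,\mu_K,\dots,\mu_K)\in\mathbb{R}^M$ in which $\mu_i$ appears $m_i$ times and $\mu_1>\dots>\mu_K$ are real. A permutation matrix $P$ is a Variant I frame permutation quantization (FPQ) encoding of $x\in\mathbb{R}^N$ if $D(m)PFx\ge 0$ elementwise. Canonical reconstruction is consistent for $(m,\hat y_{\mathrm{init}})$ if, for every $x\in\mathbb{R}^N$ and every such encoding $P$ of $x$, the vector $\hat x=F^\dagger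 P^{-1}\hat y_{\mathrm{init}}$ satisfies $D(m)PF\hat x\ge 0$ elementwise. Canonical reconstruction is consistent for every composition $m$ of $M$ and every Variant I initial codeword compatible with $m$ if and only if $M=N+1$ and $FF^*$ is the $M\times M$ matrix with $1$ on the diagonal and $-\frac1N$ in every off-diagonal entry. -/
open scoped Matrix

noncomputable section

namespace FPQ

/-- `F` is the analysis operator of a unit-norm tight frame: its rows have unit Euclidean norm and
`F* F = (M/N) I_N`. -/
structure IsUNTF {M N : ℕ} (F : Matrix (Fin M) (Fin N) ℝ) : Prop where
  unit_norm : ∀ k : Fin M, ‖WithLp.toLp 2 (F k)‖ = 1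
  tight : Fᵀ * F = ((M : ℝ) / (N : ℝ)) • (1 : Matrix (Fin N) (Fin N) ℝ)

/-- The row indices of the differencing matrix `D(m)`: pairs `(k, ℓ)` with `k ∈ I_i` and
`ℓ ∈ I_{i+1}` for some `i`. Here `m.index k` is the (zero-based) number of the block of `m`
that contains the position `k`. -/
abbrev DiffRow {M : ℕ} (m : Composition M) : Type :=
  {p : Fin M × Fin M // (m.index p.1 : ℕ) + 1 = (m.index p.2 : ℕ)}

/-- The differencing matrix `D(m)`, whose row at `(k, ℓ)` is `e_kᵀ - e_ℓᵀ`. -/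
def diffMatrix {M : ℕ} (m : Composition M) : Matrix (DiffRow m) (Fin M) ℝ :=
  Matrix.of fun p => Pi.single p.1.1 1 - Pi.single p.1.2 1

/-- `y = (μ_1, …, μ_1, …, μ_K, …, μ_K)` with `μ_i` appearing `m_i` times and
`μ_1 > ⋯ > μ_K`: a Variant I initial codeword compatible with `m`. -/
def IsVariantICodeword {M : ℕ} (m : Composition M) (y : Fin M → ℝ) : Prop :=
  ∃ μ : Fin m.length → ℝ, StrictAnti μ ∧ ∀ k, y k = μ (m.index k)

/-- The pseudo-inverse `F† = (F* F)⁻¹ F*`. -/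
def pinv {M N : ℕ} (F : Matrix (Fin M) (Fin N) ℝ) : Matrix (Fin N) (Fin M) ℝ :=
  (Fᵀ * F)⁻¹ * Fᵀ

/-- The vector `x` lies in the Variant I FPQ cell of the permutation matrix `P` of `σ`:
`D(m) P F x ≥ 0` elementwise, i.e. `P F x` is `m`-descending. -/
def InCell {M N : ℕ} (F : Matrix (Fin M) (Fin N) ℝ) (m : Composition M)
    (σ : Equiv.Perm (Fin M)) (x : Fin N → ℝ) : Prop :=
  ∀ r : DiffRow m, 0 ≤ (diffMatrix m *ᵥ (σ.permMatrix ℝ *ᵥ (F *ᵥ x))) r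

/-- The canonical decoding `x̂ = F† P⁻¹ ŷ_init`, with `P` the permutation matrix of `σ`. -/
def canonicalDecoding {M N : ℕ} (F : Matrix (Fin M) (Fin N) ℝ)
    (σ : Equiv.Perm (Fin M)) (y : Fin M → ℝ) : Fin N → ℝ :=
  pinv F *ᵥ ((σ.permMatrix ℝ)⁻¹ *ᵥ y)

/-- Canonical reconstruction is consistent with Variant I FPQ encoding that uses the frame `F`,
the composition `m` and the initial codeword `y`: whenever `P` encodes a vector `x`, the
reconstruction from `P` lies in the cell of `P`. -/
def CanonicalConsistent {M N : ℕ} (F : Matrix (Fin M) (Fin N) ℝ) (m : Composition M)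
    (y : Fin M → ℝ) : Prop :=
  ∀ (x : Fin N → ℝ) (σ : Equiv.Perm (Fin M)),
    InCell F m σ x → InCell F m σ (canonicalDecoding F σ y)

end FPQ

end


/-!
For a tight frame, `F x̂` is a positive multiple of `F F* P⁻¹ ŷ_init`, so consistency does not
involve the encoded `x`: it says that the Gram matrix `G = F F*` keeps the entries of `P⁻¹ ŷ_init`
in their order. For the finest composition `P⁻¹ ŷ_init` can be any vector with distinct entries,
and such vectors are dense, so consistency in all cases says that `G` preserves the order of the
entries of every vector. Testing this on the vectors `e_i` and `(1, …, 1)` shows that it holds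
exactly when `G = a I + 𝟙 vᵀ` with `a ≥ 0`; as `G` is symmetric with unit diagonal,
`G = (1 - b) I + b 𝟙 𝟙ᵀ`. Finally `G² = (M/N) G`, so the eigenvalues of `G` lie in `{0, M/N}`;
applied to `e_0 - e_1` and to `(1, …, 1)` this leaves only `M = N + 1` and `b = -1/N`.
-/

namespace FPQ

open Matrix

section OrderPreserving

variable {ι R : Type*}

theorem smul_one_add_replicateRow_eq_of [DecidableEq ι] [Semiring R] (a b : R) :
    a • (1 : Matrix ι ι R) + replicateRow ι (fun _ => b) =
      of fun i j => if i = j then a + b else b := by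
  ext i j
  obtain rfl | hij := eq_or_ne i j <;> simp [*]

variable [Fintype ι]

theorem smul_one_add_replicateRow_mulVec [DecidableEq ι] [Semiring R] (a : R) (v w : ι → R) :
    (a • (1 : Matrix ι ι R) + replicateRow ι v) *ᵥ w = a • w + fun _ => v ⬝ᵥ w := by
  rw [add_mulVec, smul_mulVec, one_mulVec, replicateRow_mulVec_eq_const]
  rfl

/-- A square matrix is order preserving if `w ↦ A w` never reverses the order of two entries of `w`;
for a Gram matrix this is what consistency of canonical reconstruction amounts to. Ties are
included: equal entries of `w` have equal images. -/
def IsOrderPreserving [NonUnitalNonAssocSemiring R] [LE R] (A : Matrix ι ι R) : Prop :=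
  ∀ (w : ι → R) (i j : ι), w i ≤ w j → (A *ᵥ w) i ≤ (A *ᵥ w) j

theorem IsOrderPreserving.mulVec_apply_eq [NonUnitalNonAssocSemiring R] [PartialOrder R]
    {A : Matrix ι ι R} (hA : IsOrderPreserving A) {w : ι → R} {i j : ι} (h : w i = w j) :
    (A *ᵥ w) i = (A *ᵥ w) j :=
  (hA w i j h.le).antisymm (hA w j i h.ge)

theorem IsOrderPreserving.apply_eq_apply [NonAssocSemiring R] [PartialOrder R] {A : Matrix ι ι R}
    (hA : IsOrderPreserving A) {i j k : ι} (hj : j ≠ i) (hk : k ≠ i) : A j i = A k i := by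
  classical
  have h := hA.mulVec_apply_eq (w := Pi.single i 1) (i := j) (j := k) (by simp [hj, hk])
  simpa using h

theorem IsOrderPreserving.apply_le_diag [NonAssocSemiring R] [PartialOrder R] [ZeroLEOneClass R]
    {A : Matrix ι ι R} (hA : IsOrderPreserving A) (i j : ι) : A j i ≤ A i i := by
  classical
  have h := hA (Pi.single i 1) j i (by by_cases hj : j = i <;> simp [hj])
  simpa using h

variable [DecidableEq ι]

theorem isOrderPreserving_smul_one_add_replicateRow [Semiring R] [PartialOrder R]
    [IsOrderedRing R] {a : R} (ha : 0 ≤ a) (v : ι → R) :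
    IsOrderPreserving (a • (1 : Matrix ι ι R) + replicateRow ι v) := by
  intro w i j hij
  simp only [smul_one_add_replicateRow_mulVec, Pi.add_apply, Pi.smul_apply, smul_eq_mul]
  gcongr

theorem isOrderPreserving_iff_eq_smul_one_add_replicateRow [Ring R] [PartialOrder R]
    [IsOrderedRing R] {A : Matrix ι ι R} :
    IsOrderPreserving A ↔ ∃ a : R, 0 ≤ a ∧ ∃ v : ι → R, A = a • 1 + replicateRow ι v := by
  constructor
  · intro hA
    rcases subsingleton_or_nontrivial ι with _ | _
    · refine ⟨0, le_rfl, fun i => A i i, ?_⟩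
      ext i j
      simp [Subsingleton.elim i j]
    choose t ht using fun i : ι => exists_ne i
    have hoff {i j : ι} (hij : i ≠ j) : A i j = A (t j) j := hA.apply_eq_apply hij (ht j)
    have hrow (i : ι) : ∑ j, A i j = (A i i - A (t i) i) + ∑ j, A (t j) j := by
      rw [← sub_eq_iff_eq_add, ← Finset.sum_sub_distrib]
      exact Finset.sum_eq_single_of_mem i (Finset.mem_univ i)
        fun j _ hj => sub_eq_zero.2 (hoff hj.symm)
    obtain ⟨o⟩ : Nonempty ι := inferInstance
    have hdiag (i : ι) : A i i - A (t i) i = A o o - A (t o) o := by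
      have h : ∑ j, A i j = ∑ j, A o j := by
        simpa [mulVec, dotProduct] using hA.mulVec_apply_eq (w := 1) (i := i) (j := o) rfl
      rwa [hrow, hrow, add_left_inj] at h
    refine ⟨A o o - A (t o) o, sub_nonneg.2 (hA.apply_le_diag _ _), fun i => A (t i) i, ?_⟩
    ext i j
    obtain rfl | hij := eq_or_ne i j
    · simp [← hdiag i]
    · simp [hij, hoff hij]
  · rintro ⟨a, ha, v, rfl⟩
    exact isOrderPreserving_smul_one_add_replicateRow ha v

theorem IsOrderPreserving.exists_eq_of_isSymm [Ring R] [PartialOrder R] [IsOrderedRing R]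
    {A : Matrix ι ι R} (hA : IsOrderPreserving A) (hsymm : A.IsSymm) :
    ∃ a b : R, A = a • 1 + replicateRow ι fun _ => b := by
  obtain ⟨a, -, v, rfl⟩ := isOrderPreserving_iff_eq_smul_one_add_replicateRow.1 hA
  have hv (i j : ι) : v i = v j := by
    obtain rfl | hij := eq_or_ne i j
    · rfl
    · simpa [hij, hij.symm] using hsymm.apply i j
  cases isEmpty_or_nonempty ι with
  | inl _ => exact ⟨0, 0, Subsingleton.elim _ _⟩
  | inr h => exact ⟨a, v h.some, by rw [← funext fun i => hv i h.some]⟩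

end OrderPreserving

section Sorting

variable {M : ℕ}

-- Sort `w`; if `w i = w j` and the sorting permutation lists `j` first, swap the two.
theorem exists_perm_antitone_comp {α : Type*} [LinearOrder α] (w : Fin M → α) {i j : Fin M}
    (hij : w i ≤ w j) :
    ∃ σ : Equiv.Perm (Fin M), Antitone (w ∘ σ) ∧ σ.symm j ≤ σ.symm i := by
  obtain ⟨σ, hσ⟩ : ∃ σ : Equiv.Perm (Fin M), Antitone (w ∘ σ) :=
    ⟨Tuple.sort (OrderDual.toDual ∘ w), Tuple.monotone_sort (OrderDual.toDual ∘ w)⟩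
  obtain h | h := le_total (σ.symm j) (σ.symm i)
  · exact ⟨σ, hσ, h⟩
  have heq : w i = w j := hij.antisymm (by simpa using hσ h)
  have hw : w ∘ Equiv.swap i j = w := by
    ext k
    rw [Function.comp_apply, Equiv.swap_apply_def]
    split_ifs with hi hj <;> simp [*]
  refine ⟨σ.trans (Equiv.swap i j), ?_, by simpa using h⟩
  rwa [Equiv.coe_trans, ← Function.comp_assoc, hw]

theorem mem_closure_setOf_strictAnti {y : Fin M → ℝ} (hy : Antitone y) :
    y ∈ closure {z : Fin M → ℝ | StrictAnti z} := by
  have hlim : Filter.Tendsto (fun ε : ℝ => fun k : Fin M => y k - ε * k)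
      (nhdsWithin 0 (Set.Ioi 0)) (nhds y) := by
    have hcont : Continuous fun ε : ℝ => fun k : Fin M => y k - ε * k := by fun_prop
    simpa using (hcont.tendsto 0).mono_left nhdsWithin_le_nhds
  refine mem_closure_of_tendsto hlim ?_
  filter_upwards [self_mem_nhdsWithin] with ε (hε : 0 < ε) i j hij
  have hij' : (i : ℝ) < j := by exact_mod_cast hij
  linarith [hy hij.le, mul_lt_mul_of_pos_left hij' hε]

theorem index_ones (k : Fin M) : ((Composition.ones M).index k : ℕ) = k := by
  have hlower := (Composition.ones M).sizeUpTo_index_le k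
  have hupper := (Composition.ones M).lt_sizeUpTo_index_succ k
  have hlength := ((Composition.ones M).index k).2.trans_eq (Composition.ones_length M)
  rw [Composition.ones_sizeUpTo] at hlower hupper
  rw [Fin.val_succ] at hupper
  omega

theorem isVariantICodeword_ones {y : Fin M → ℝ} (hy : StrictAnti y) :
    IsVariantICodeword (Composition.ones M) y :=
  ⟨y ∘ Fin.cast (Composition.ones_length M), fun _ _ hij => hy hij,
    fun k => congrArg y (Fin.ext (index_ones k).symm)⟩

end Sorting

section Cells

variable {M N : ℕ} {F : Matrix (Fin M) (Fin N) ℝ} {m : Composition M} {σ : Equiv.Perm (Fin M)}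
  {x : Fin N → ℝ} {y : Fin M → ℝ} {c : ℝ}

theorem inCell_iff : InCell F m σ x ↔ ∀ k ℓ : Fin M, (m.index k : ℕ) + 1 = m.index ℓ →
    (F *ᵥ x) (σ ℓ) ≤ (F *ᵥ x) (σ k) := by
  have hrow (r : DiffRow m) : (diffMatrix m *ᵥ (σ.permMatrix ℝ *ᵥ (F *ᵥ x))) r =
      (F *ᵥ x) (σ r.1.1) - (F *ᵥ x) (σ r.1.2) := by
    rw [permMatrix_mulVec]
    exact (sub_dotProduct _ _ _).trans (by simp)
  simp only [InCell, hrow, sub_nonneg, Subtype.forall, Prod.forall]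

theorem inCell_zero : InCell F m σ 0 := by
  simp [inCell_iff]

theorem inCell_ones_iff :
    InCell F (Composition.ones M) σ x ↔ Antitone ((F *ᵥ x) ∘ σ) := by
  simp only [inCell_iff, index_ones, antitone_iff_forall_covBy, Fin.covBy_iff,
    Nat.covBy_iff_add_one_eq, Function.comp_apply]

theorem inv_permMatrix_mulVec {ι R : Type*} [Fintype ι] [DecidableEq ι] [CommRing R]
    (σ : Equiv.Perm ι) (y : ι → R) : (σ.permMatrix R)⁻¹ *ᵥ y = y ∘ σ.symm := by
  have hinv : (σ.permMatrix R)⁻¹ = (σ⁻¹).permMatrix R :=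
    inv_eq_left_inv (by rw [← permMatrix_mul, mul_inv_cancel, permMatrix_one])
  rw [hinv, permMatrix_mulVec, Equiv.Perm.inv_def]

theorem pinv_of_tight (hc : c ≠ 0) (hF : Fᵀ * F = c • 1) : pinv F = c⁻¹ • Fᵀ := by
  have hinv : (Fᵀ * F)⁻¹ = c⁻¹ • 1 := inv_eq_left_inv (by simp [hF, smul_smul, hc])
  rw [pinv, hinv, smul_mul, Matrix.one_mul]

theorem mulVec_canonicalDecoding_of_tight (hc : c ≠ 0) (hF : Fᵀ * F = c • 1) :
    F *ᵥ canonicalDecoding F σ y = c⁻¹ • ((F * Fᵀ) *ᵥ (y ∘ σ.symm)) := by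
  rw [canonicalDecoding, inv_permMatrix_mulVec, pinv_of_tight hc hF, mulVec_mulVec, Matrix.mul_smul,
    smul_mulVec]

theorem antitone_gram_mulVec (hc : 0 < c) (hF : Fᵀ * F = c • 1)
    (h : ∀ y, StrictAnti y → CanonicalConsistent F (Composition.ones M) y)
    {w : Fin M → ℝ} (hw : Antitone (w ∘ σ)) : Antitone (((F * Fᵀ) *ᵥ w) ∘ σ) := by
  let sorted : Set (Fin M → ℝ) := {y | Antitone (((F * Fᵀ) *ᵥ (y ∘ σ.symm)) ∘ σ)}
  have hclosed : IsClosed sorted :=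
    isClosed_antitone.preimage (f := fun y => ((F * Fᵀ) *ᵥ (y ∘ σ.symm)) ∘ σ)
      (by unfold Function.comp mulVec dotProduct; fun_prop)
  have hstrict : {y : Fin M → ℝ | StrictAnti y} ⊆ sorted := by
    intro y hy i j hij
    have hcell := inCell_ones_iff.1 (h y hy 0 σ inCell_zero) hij
    simpa [mulVec_canonicalDecoding_of_tight hc.ne' hF, hc] using hcell
  have hmem : w ∘ σ ∈ sorted :=
    closure_minimal hstrict hclosed (mem_closure_setOf_strictAnti hw)
  simpa [sorted, Function.comp_assoc] using hmem

theorem forall_canonicalConsistent_iff_isOrderPreserving (hc : 0 < c) (hF : Fᵀ * F = c • 1) :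
    (∀ (m : Composition M) (y : Fin M → ℝ), IsVariantICodeword m y → CanonicalConsistent F m y) ↔
      IsOrderPreserving (F * Fᵀ) := by
  constructor
  · intro h w i j hij
    obtain ⟨σ, hσ, hji⟩ := exists_perm_antitone_comp w hij
    have hanti := antitone_gram_mulVec hc hF (fun y hy => h _ y (isVariantICodeword_ones hy)) hσ
    simpa using hanti hji
  · rintro hG m y ⟨μ, hμ, hy⟩ x σ -
    refine inCell_iff.2 fun k ℓ hkℓ => ?_
    have hyle : y ℓ ≤ y k := by
      rw [hy, hy]
      exact hμ.antitone (Fin.le_def.2 (by omega))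
    have hle := hG (y ∘ σ.symm) (σ ℓ) (σ k) (by simpa using hyle)
    simpa [mulVec_canonicalDecoding_of_tight hc.ne' hF, hc] using hle

end Cells

section Gram

theorem eq_zero_or_eq_of_mulVec_eq_smul {ι R : Type*} [Fintype ι] [CommRing R] [IsDomain R]
    {A : Matrix ι ι R} {c s : R} {w : ι → R} (hA : A * A = c • A) (hw : w ≠ 0)
    (hs : A *ᵥ w = s • w) : s = 0 ∨ s = c := by
  have hsq : (s * (s - c)) • w = 0 := by
    rw [mul_sub, sub_smul, mul_smul, ← hs, ← mulVec_smul, ← hs, mulVec_mulVec, hA, smul_mulVec, hs,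
      smul_smul, mul_comm, sub_self]
  rwa [smul_eq_zero_iff_left hw, mul_eq_zero, sub_eq_zero] at hsq

theorem eq_add_one_and_eq_neg_one_div {K : Type*} [Field K] [LinearOrder K] [IsStrictOrderedRing K]
    {M N a b : K} (hN : 1 < N) (hNM : N < M) (hab : a + b = 1)
    (ha : a = 0 ∨ a = M / N) (hs : a + M * b = 0 ∨ a + M * b = M / N) :
    M = N + 1 ∧ b = -(1 / N) := by
  have hN0 : 0 < N := zero_lt_one.trans hN
  have hM0 : M ≠ 0 := (hN0.trans hNM).ne'
  rcases ha with rfl | rfl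
  · obtain rfl : b = 1 := by linarith
    rcases hs with hs | hs
    · exact absurd (by simpa using hs) hM0
    · have hdiv : M / N < M := div_lt_self (hN0.trans hNM) hN
      linarith
  · rcases hs with hs | hs
    · have hb : b = -(1 / N) := mul_left_cancel₀ hM0 (by linear_combination hs)
      subst hb
      field_simp at hab
      exact ⟨by linarith, rfl⟩
    · have hb : b = 0 := (mul_eq_zero.1 (by linarith)).resolve_left hM0
      have hdiv : 1 < M / N := (one_lt_div hN0).2 hNM
      linarith

theorem gram_mul_gram_of_tight {ι κ R : Type*} [Fintype ι] [Fintype κ] [DecidableEq κ]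
    [CommSemiring R] {F : Matrix ι κ R} {c : R} (hF : Fᵀ * F = c • 1) :
    (F * Fᵀ) * (F * Fᵀ) = c • (F * Fᵀ) := by
  rw [Matrix.mul_assoc, ← Matrix.mul_assoc Fᵀ, hF, smul_mul, Matrix.one_mul, Matrix.mul_smul]

variable {M N : ℕ} {F : Matrix (Fin M) (Fin N) ℝ}

theorem IsUNTF.gram_diag (hF : IsUNTF F) (k : Fin M) : (F * Fᵀ) k k = 1 := by
  have hnorm : ‖WithLp.toLp 2 (F k)‖ ^ 2 = 1 := by rw [hF.unit_norm k, one_pow]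
  rw [EuclideanSpace.real_norm_sq_eq] at hnorm
  simpa [mul_apply, pow_two] using hnorm

theorem IsUNTF.eq_add_one_and_eq_of_gram_eq (hN : 2 ≤ N) (hNM : N < M) (hF : IsUNTF F) {a b : ℝ}
    (hG : F * Fᵀ = a • 1 + replicateRow (Fin M) fun _ => b) :
    M = N + 1 ∧ a + b = 1 ∧ b = -(1 / (N : ℝ)) := by
  let i : Fin M := ⟨0, by omega⟩
  let j : Fin M := ⟨1, by omega⟩
  have hij : i ≠ j := by simp [i, j]
  have hab : a + b = 1 := by simpa [hG] using hF.gram_diag i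
  have hsq := gram_mul_gram_of_tight hF.tight
  have ha : a = 0 ∨ a = M / N := by
    refine eq_zero_or_eq_of_mulVec_eq_smul hsq (w := Pi.single i 1 - Pi.single j 1) ?_ ?_
    · intro h
      simpa [hij] using congrFun h i
    · ext k
      simp [hG, smul_one_add_replicateRow_mulVec]
  have hs : a + M * b = 0 ∨ a + M * b = M / N := by
    refine eq_zero_or_eq_of_mulVec_eq_smul hsq (w := 1) ?_ ?_
    · exact fun h => one_ne_zero (congrFun h i)
    · ext k
      simp [hG, smul_one_add_replicateRow_mulVec, dotProduct]
  obtain ⟨hMN, hb⟩ :=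
    eq_add_one_and_eq_neg_one_div (by exact_mod_cast hN) (by exact_mod_cast hNM) hab ha hs
  exact ⟨by exact_mod_cast hMN, hab, hb⟩

theorem IsUNTF.isOrderPreserving_gram_iff (hN : 2 ≤ N) (hNM : N < M) (hF : IsUNTF F) :
    IsOrderPreserving (F * Fᵀ) ↔ M = N + 1 ∧
      F * Fᵀ = of fun k ℓ : Fin M => if k = ℓ then (1 : ℝ) else -(1 / (N : ℝ)) := by
  constructor
  · intro h
    obtain ⟨a, b, hG⟩ := h.exists_eq_of_isSymm (by rw [IsSymm, transpose_mul, transpose_transpose])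
    obtain ⟨hMN, hab, hb⟩ := hF.eq_add_one_and_eq_of_gram_eq hN hNM hG
    exact ⟨hMN, by rw [hG, smul_one_add_replicateRow_eq_of, hab, hb]⟩
  · rintro ⟨-, hG⟩
    have hform : F * Fᵀ = (1 + 1 / (N : ℝ)) • 1 + replicateRow (Fin M) fun _ => -(1 / (N : ℝ)) := by
      rw [hG, smul_one_add_replicateRow_eq_of, add_neg_cancel_right]
    exact hform ▸ isOrderPreserving_smul_one_add_replicateRow (by positivity) _

end Gram

end FPQ

theorem stmt10 {M N : ℕ} (hM : 3 ≤ M) (hN : 2 ≤ N) (hNM : N < M)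
    (F : Matrix (Fin M) (Fin N) ℝ) (hF : FPQ.IsUNTF F) :
    (∀ (m : Composition M) (y : Fin M → ℝ),
        FPQ.IsVariantICodeword m y → FPQ.CanonicalConsistent F m y) ↔
      (M = N + 1 ∧
        F * Fᵀ = Matrix.of fun k ℓ : Fin M => if k = ℓ then (1 : ℝ) else -(1 / (N : ℝ))) := by
  have hc : (0 : ℝ) < M / N := by positivity
  exact (FPQ.forall_canonicalConsistent_iff_isOrderPreserving hc hF.tight).trans
    (hF.isOrderPreserving_gram_iff hN hNM)
end
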